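/- Let N, K be positive integers with K ≥ N, and let v : ℤ → ℂ be finitely supported. The Weyl–Heisenberg set Φ = {φ_{k,i}} with φ_{k,i}[n] = v[n−iK]·exp(2πi k(n−iK)/N), k ∈ {0,…,N−1}, i ∈ ℤ, is orthonormal if and only if the Weyl–Heisenberg set Ξ = {ξ_{k,i}} with ξ_{k,i}[n] = v[n−iN]·exp(2πi k(n−iN)/K), k ∈ {0,…,K−1}, i ∈ ℤ, is a tight frame for ℓ²(ℤ) with frame bound K/N, i.e. ∑_{k=0}^{K−1} ∑_{i∈ℤ} |⟨x, ξ_{k,i}⟩|² = (K/N)·‖x‖² for every x ∈ ℓ²(ℤ). -/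

import Mathlib

open Complex

open scoped ComplexConjugate
open ZMod (stdAddChar dft)

/-!
For `d : ℤ` put `p_d n = conj (v n) * v (n + d K)`. After a translation, the Gram matrix of `Φ`
is, up to unimodular factors, the discrete Fourier transform over `ℤ/N` of the `N`-periodizations
of the `p_d`, so by Fourier inversion `Φ` is orthonormal iff the periodization of `p_d` is
constantly `1 / N` for `d = 0` and vanishes for `d ≠ 0`.

On the other side, Parseval over `ℤ/K` shows that, on finitely supported sequences, the frame
energy of `Ξ` is the quadratic form of a matrix supported on the diagonals `d K`, whose entries
there are `K` times the values of the periodization of `p_d`. A complex quadratic form determines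
its matrix, so the tight frame identity for these sequences says that the matrix is `K / N` times
the identity, which is the same condition; the identity then extends to `ℓ²(ℤ)` by density.
-/

/-! ### Periodization and the discrete Fourier transform -/

section Periodization

variable {E : Type*} [AddCommMonoid E] [TopologicalSpace E]

/-- The `N`-periodization `∑ i, f (· - i N)` of a sequence, as a function on `ℤ/N`, evaluated
through the canonical integer representative of a residue. -/
noncomputable def periodization (N : ℕ) (f : ℤ → E) (r : ZMod N) : E :=
  ∑' i : ℤ, f (r.cast - i * N)

lemma periodization_intCast (N : ℕ) (f : ℤ → E) (a : ℤ) :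
    periodization N f a = ∑' i : ℤ, f (a - i * N) := by
  rw [periodization, ← (Equiv.addRight (a / N)).tsum_eq fun i => f (a - i * N)]
  refine tsum_congr fun i => congrArg f ?_
  rw [ZMod.coe_intCast, Int.emod_def, Equiv.coe_addRight]
  ring

lemma injective_sub_mul_natCast (N : ℕ) [NeZero N] (a : ℤ) :
    Function.Injective fun i : ℤ => a - i * N := fun i j hij => by
  simpa [NeZero.ne N] using hij

lemma periodization_eq_tsum_ite (N : ℕ) [NeZero N] (f : ℤ → E) (r : ZMod N) :
    periodization N f r = ∑' n : ℤ, if (n : ZMod N) = r then f n else 0 := by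
  rw [← (injective_sub_mul_natCast N r.cast).tsum_eq]
  · simp [periodization]
  · intro n hn
    have hnr : (n : ZMod N) = r := by
      by_contra h
      simp [h] at hn
    obtain ⟨i, hi⟩ := (ZMod.intCast_eq_intCast_iff_dvd_sub n r.cast N).1 (by simpa using hnr)
    exact ⟨i, by linear_combination hi⟩

lemma dft_periodization {E : Type*} [NormedAddCommGroup E] [NormedSpace ℂ E] [CompleteSpace E]
    {N : ℕ} [NeZero N] {f : ℤ → E} (hf : Summable f) (k : ZMod N) :
    dft (periodization N f) k = ∑' n : ℤ, stdAddChar (-(n * k) : ZMod N) • f n := by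
  have hfib (r : ZMod N) : Summable fun n : ℤ => if (n : ZMod N) = r then f n else 0 :=
    (hf.indicator {n : ℤ | (n : ZMod N) = r}).congr fun n => by simp [Set.indicator_apply]
  calc dft (periodization N f) k
      = ∑ r : ZMod N, ∑' n : ℤ, stdAddChar (-(r * k)) • if (n : ZMod N) = r then f n else 0 := by
        simp_rw [ZMod.dft_apply, periodization_eq_tsum_ite, (hfib _).tsum_const_smul]
    _ = ∑' n : ℤ, ∑ r : ZMod N, stdAddChar (-(r * k)) • if (n : ZMod N) = r then f n else 0 :=
        (Summable.tsum_finsetSum fun r _ => (hfib r).const_smul _).symm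
    _ = ∑' n : ℤ, stdAddChar (-(n * k) : ZMod N) • f n := by simp

lemma dft_const {N : ℕ} [NeZero N] (c : ℂ) :
    dft (fun _ : ZMod N => c) = Pi.single 0 (N * c) := by
  ext k
  simp_rw [ZMod.dft_apply, smul_eq_mul, ← Finset.sum_mul, ← mul_neg,
    AddChar.sum_mulShift _ (ZMod.isPrimitive_stdAddChar N), neg_eq_zero, ZMod.card,
    Pi.single_apply, Nat.cast_ite, Nat.cast_zero, ite_zero_mul]

lemma dft_eq_single_zero_iff {N : ℕ} [NeZero N] (Φ : ZMod N → ℂ) (c : ℂ) :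
    dft Φ = Pi.single 0 c ↔ ∀ r, Φ r = c / N := by
  have hc : Pi.single 0 c = dft fun _ : ZMod N => c / N := by
    rw [dft_const, mul_div_cancel₀ c (NeZero.ne (N : ℂ))]
  rw [hc, dft.injective.eq_iff, funext_iff]

lemma sum_norm_sq_sum_mul_stdAddChar {ι : Type*} {K : ℕ} [NeZero K] (S : Finset ι) (c : ι → ℂ)
    (g : ι → ZMod K) :
    ((∑ k, ‖∑ n ∈ S, c n * stdAddChar (k * g n)‖ ^ 2 : ℝ) : ℂ)
      = ∑ a ∈ S, ∑ b ∈ S, if g a = g b then K * (c a * conj (c b)) else 0 := by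
  have hterm (k : ZMod K) (a b : ι) :
      c a * stdAddChar (k * g a) * conj (c b * stdAddChar (k * g b))
        = stdAddChar (k * (g a - g b)) * (c a * conj (c b)) := by
    rw [map_mul conj, ← AddChar.map_neg_eq_conj, mul_sub, sub_eq_add_neg, AddChar.map_add_eq_mul]
    ring
  push_cast
  simp_rw [← Complex.mul_conj', map_sum, Finset.sum_mul_sum, hterm]
  rw [Finset.sum_comm]
  refine Finset.sum_congr rfl fun a _ => ?_
  rw [Finset.sum_comm]
  refine Finset.sum_congr rfl fun b _ => ?_
  rw [← Finset.sum_mul, AddChar.sum_mulShift _ (ZMod.isPrimitive_stdAddChar K), ZMod.card,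
    Nat.cast_ite, Nat.cast_zero, ite_zero_mul]
  simp only [sub_eq_zero]

end Periodization

/-! ### Quadratic forms of infinite matrices -/

section QuadForm

variable {ι : Type*}

/-- The quadratic form `x ↦ x* A x` of an infinite matrix, on finitely supported vectors. -/
noncomputable def quadForm (A : Matrix ι ι ℂ) (x : ι →₀ ℂ) : ℂ :=
  x.sum fun a xa => x.sum fun b xb => conj xa * A a b * xb

lemma quadForm_single (A : Matrix ι ι ℂ) (a : ι) (s : ℂ) :
    quadForm A (Finsupp.single a s) = conj s * A a a * s := by
  simp [quadForm]

lemma quadForm_single_add_single (A : Matrix ι ι ℂ) (a b : ι) (s t : ℂ) :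
    quadForm A (Finsupp.single a s + Finsupp.single b t)
      = (conj s * A a a * s + conj s * A a b * t) + (conj t * A b a * s + conj t * A b b * t) := by
  classical
  have hinner (c : ι) (xc : ℂ) :
      (Finsupp.single a s + Finsupp.single b t).sum (fun d xd => conj xc * A c d * xd)
        = conj xc * A c a * s + conj xc * A c b * t := by
    rw [Finsupp.sum_add_index' (by simp) (by intros; ring), Finsupp.sum_single_index (by simp),
      Finsupp.sum_single_index (by simp)]
  simp_rw [quadForm, hinner]
  rw [Finsupp.sum_add_index' (by simp) (by intros; simp only [map_add]; ring),
    Finsupp.sum_single_index (by simp), Finsupp.sum_single_index (by simp)]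

lemma quadForm_injective : Function.Injective (quadForm : Matrix ι ι ℂ → (ι →₀ ℂ) → ℂ) := by
  intro A B h
  ext a b
  have hdiag (c : ι) : A c c = B c c := by
    simpa [quadForm_single] using congrFun h (Finsupp.single c 1)
  have hre := congrFun h (Finsupp.single a 1 + Finsupp.single b 1)
  have him := congrFun h (Finsupp.single a 1 + Finsupp.single b I)
  simp only [quadForm_single_add_single, hdiag, map_one, conj_I] at hre him
  linear_combination (hre - I * him) / 2 + (A a b - B a b - A b a + B b a) / 2 * I_mul_I

lemma quadForm_smul_one [DecidableEq ι] (C : ℝ) (x : ι →₀ ℂ) :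
    quadForm ((C : ℂ) • (1 : Matrix ι ι ℂ)) x = (C * ∑' n, ‖x n‖ ^ 2 : ℝ) := by
  have hsum : ∑' n, ‖x n‖ ^ 2 = ∑ n ∈ x.support, ‖x n‖ ^ 2 :=
    tsum_eq_sum fun n hn => by simp [Finsupp.notMem_support_iff.1 hn]
  rw [hsum, quadForm, Finsupp.sum]
  push_cast
  rw [Finset.mul_sum]
  refine Finset.sum_congr rfl fun a _ => ?_
  rw [Finsupp.sum, Finset.sum_eq_single a, Matrix.smul_apply, Matrix.one_apply_eq, ← conj_mul',
    smul_eq_mul]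
  · ring
  · intro b _ hba
    simp [Matrix.one_apply_ne hba.symm]
  · intro ha
    simp [Finsupp.notMem_support_iff.1 ha]

end QuadForm

/-! ### Density and square-summability -/

lemma hasSum_prod_of_hasSum_sum {ι κ : Type*} [Fintype κ] {f : κ → ι → ℝ} {s : ℝ}
    (hf : ∀ k i, 0 ≤ f k i) (h : HasSum (fun i => ∑ k, f k i) s) :
    HasSum (fun p : κ × ι => f p.1 p.2) s := by
  have hfk (k : κ) : Summable (f k) :=
    h.summable.of_nonneg_of_le (hf k) fun i =>
      Finset.single_le_sum (fun k _ => hf k i) (Finset.mem_univ k)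
  have hprod : Summable fun p : κ × ι => f p.1 p.2 :=
    (summable_prod_of_nonneg fun p => hf p.1 p.2).2 ⟨hfk, Summable.of_finite⟩
  rw [hprod.hasSum_iff, hprod.tsum_prod, tsum_fintype, ← Summable.tsum_finsetSum fun k _ => hfk k,
    h.tsum_eq]

lemma dense_setOf_finite_support {ι : Type*} {E : ι → Type*} [∀ i, NormedAddCommGroup (E i)]
    {p : ENNReal} [Fact (1 ≤ p)] (hp : p ≠ ⊤) : Dense {x : lp E p | {i | x i ≠ 0}.Finite} := by
  classical
  refine fun x => mem_closure_of_tendsto (lp.hasSum_single hp x) (.of_forall fun S => ?_)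
  refine S.finite_toSet.subset fun i hi => ?_
  by_contra hiS
  refine hi ?_
  rw [lp.coeFn_sum, Finset.sum_apply]
  exact Finset.sum_eq_zero fun j hj => lp.single_apply_ne p j _ fun hij => hiS (hij ▸ hj)

lemma memℓp_two_iff {ι E : Type*} [NormedAddCommGroup E] {x : ι → E} :
    Memℓp x 2 ↔ Summable fun n => ‖x n‖ ^ 2 := by
  simpa using memℓp_gen_iff (f := x) (p := 2) (by simp)

lemma lp_two_norm_sq {ι E : Type*} [NormedAddCommGroup E] (x : lp (fun _ : ι => E) 2) :
    ‖x‖ ^ 2 = ∑' n, ‖x n‖ ^ 2 := by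
  simpa using lp.norm_rpow_eq_tsum (p := 2) (by simp) x

lemma hasSum_norm_sq_of_dense {𝕜 E F ι : Type*} [NontriviallyNormedField 𝕜]
    [NormedAddCommGroup E] [NormedSpace 𝕜 E] [NormedAddCommGroup F] [NormedSpace 𝕜 F]
    (T : ι → E →L[𝕜] F) {s : Set E} (hs : Dense s) {C : ℝ}
    (h : ∀ x ∈ s, HasSum (fun i => ‖T i x‖ ^ 2) (C * ‖x‖ ^ 2)) (x : E) :
    HasSum (fun i => ‖T i x‖ ^ 2) (C * ‖x‖ ^ 2) := by
  have hle (x : E) (J : Finset ι) : ∑ i ∈ J, ‖T i x‖ ^ 2 ≤ C * ‖x‖ ^ 2 :=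
    hs.induction (fun x hx => sum_le_hasSum J (fun _ _ => sq_nonneg _) (h x hx))
      (isClosed_le (by fun_prop) (by fun_prop)) x
  have hmem (x : E) : Memℓp (fun i => T i x) 2 :=
    memℓp_gen' (C := C * ‖x‖ ^ 2) (by simpa using hle x)
  let A : E →ₗ[𝕜] lp (fun _ : ι => F) 2 :=
    { toFun := fun x => ⟨fun i => T i x, hmem x⟩
      map_add' := fun x y => Subtype.ext (funext fun i => map_add (T i) x y)
      map_smul' := fun c x => Subtype.ext (funext fun i => map_smul (T i) c x) }
  have hA (x : E) : ‖A x‖ ^ 2 = ∑' i, ‖T i x‖ ^ 2 := lp_two_norm_sq (A x)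
  have hbound (x : E) : ‖A x‖ ≤ √C * ‖x‖ := by
    rw [← Real.sqrt_sq (norm_nonneg x), ← Real.sqrt_mul' C (sq_nonneg _)]
    refine Real.le_sqrt_of_sq_le ?_
    rw [hA]
    exact (memℓp_two_iff.1 (hmem x)).tsum_le_of_sum_le (hle x)
  -- `A` is bounded, so both sides of the identity are continuous in `x`.
  have hcont : Continuous A := AddMonoidHomClass.continuous_of_bound A _ hbound
  have hiso : ‖A x‖ ^ 2 = C * ‖x‖ ^ 2 :=
    hs.induction (fun x hx => (hA x).trans (h x hx).tsum_eq)
      (isClosed_eq (by fun_prop) (by fun_prop)) x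
  rw [← hiso, hA]
  exact (memℓp_two_iff.1 (hmem x)).hasSum

/-! ### Orthonormality of Weyl–Heisenberg systems -/

/-- The Weyl–Heisenberg system of window `v` with `N` modulations and translation step `K`. The
modulation index is taken in `ℤ/N`, because `exp (2πi k (n - i K) / N)` depends on `k` mod `N`. -/
noncomputable def weylHeisenberg (N K : ℕ) [NeZero N] (v : ℤ → ℂ) (k : ZMod N) (i n : ℤ) : ℂ :=
  v (n - i * K) * stdAddChar (k * ((n - i * K : ℤ) : ZMod N))

lemma weylHeisenberg_natCast (N K : ℕ) [NeZero N] (v : ℤ → ℂ) (k : ℕ) (i n : ℤ) :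
    weylHeisenberg N K v k i n
      = v (n - i * K) * exp (2 * Real.pi * I * (k : ℂ) * ((n - i * (K : ℤ) : ℤ) : ℂ) / N) := by
  have hk : (k : ZMod N) * ((n - i * K : ℤ) : ZMod N) = (k * (n - i * K) : ℤ) := by push_cast; rfl
  rw [weylHeisenberg, hk, ZMod.stdAddChar_coe]
  push_cast
  ring_nf

lemma bijective_natCast_fin (N : ℕ) [NeZero N] :
    Function.Bijective fun k : Fin N => ((k : ℕ) : ZMod N) := by
  refine (Fintype.bijective_iff_surjective_and_card _).2 ⟨fun r => ?_, by simp⟩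
  exact ⟨⟨r.val, r.val_lt⟩, ZMod.natCast_zmod_val r⟩

/-- The correlation `n ↦ conj (v n) * v (n + d)` of the window `v` with its translate by `d`,
whose periodizations encode both orthonormality and the tight frame property. -/
noncomputable def lagProduct (v : ℤ → ℂ) (d n : ℤ) : ℂ := conj (v n) * v (n + d)

lemma summable_conj_mul {ι : Type*} {x y : ι → ℂ} (hx : Memℓp x 2) (hy : Memℓp y 2) :
    Summable fun n => conj (x n) * y n := by
  simpa [mul_comm] using lp.summable_inner (𝕜 := ℂ) (⟨x, hx⟩ : lp (fun _ : ι => ℂ) 2) ⟨y, hy⟩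

lemma summable_lagProduct {v : ℤ → ℂ} (hv : Memℓp v 2) (d : ℤ) : Summable (lagProduct v d) := by
  refine summable_conj_mul hv (memℓp_two_iff.2 ?_)
  exact (Equiv.addRight d).summable_iff.2 (memℓp_two_iff.1 hv)

lemma tsum_conj_weylHeisenberg_mul {N : ℕ} [NeZero N] (K : ℕ) {v : ℤ → ℂ} (hv : Memℓp v 2)
    (k l : ZMod N) (i j : ℤ) :
    ∑' n, conj (weylHeisenberg N K v k i n) * weylHeisenberg N K v l j n
      = stdAddChar (l * (((i - j) * K : ℤ) : ZMod N))
        * dft (periodization N (lagProduct v ((i - j) * K))) (k - l) := by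
  rw [dft_periodization (summable_lagProduct hv _), ← tsum_mul_left,
    ← (Equiv.addRight (i * K : ℤ)).tsum_eq]
  refine tsum_congr fun n => ?_
  have hj : n + i * K - j * K = n + (i - j) * K := by ring
  have hphase : stdAddChar (-(k * (n : ZMod N))) *
        (stdAddChar (l * ((n + (i - j) * K : ℤ) : ZMod N)) : ℂ)
      = stdAddChar (l * (((i - j) * K : ℤ) : ZMod N)) * stdAddChar (-(n * (k - l)) : ZMod N) := by
    rw [← AddChar.map_add_eq_mul, ← AddChar.map_add_eq_mul]
    congr 1
    push_cast
    ring
  simp only [weylHeisenberg, lagProduct, Equiv.coe_addRight, add_sub_cancel_right, hj, map_mul,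
    ← AddChar.map_neg_eq_conj, smul_eq_mul]
  linear_combination conj (v n) * v (n + (i - j) * K) * hphase

theorem orthonormal_weylHeisenberg_iff {N : ℕ} [NeZero N] (K : ℕ) {v : ℤ → ℂ} (hv : Memℓp v 2) :
    (∀ (k l : ZMod N) (i j : ℤ),
        ∑' n, conj (weylHeisenberg N K v k i n) * weylHeisenberg N K v l j n
          = if k = l ∧ i = j then 1 else 0)
      ↔ ∀ (d : ℤ) (r : ZMod N),
        periodization N (lagProduct v (d * K)) r = (if d = 0 then 1 else 0) / N := by
  simp_rw [tsum_conj_weylHeisenberg_mul K hv, ← dft_eq_single_zero_iff, funext_iff]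
  constructor
  · intro h d k
    have hk := h k 0 d 0
    simp only [zero_mul, AddChar.map_zero_eq_one, one_mul, sub_zero] at hk
    simp [hk, Pi.single_apply, ite_and]
  · intro h k l i j
    rw [h]
    by_cases hij : i = j
    · simp [hij, Pi.single_apply, sub_eq_zero]
    · simp [hij, sub_ne_zero.2 hij]

/-! ### Tight Weyl–Heisenberg frames -/

section Frame

/-- The coefficient `⟨x, ξ_{k,i}⟩` of a sequence `x` against the Weyl–Heisenberg system with `N`
modulations and translation step `K`. -/
noncomputable def weylHeisenbergCoeff (N K : ℕ) [NeZero N] (v x : ℤ → ℂ) (k : ZMod N) (i : ℤ) : ℂ :=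
  ∑' n, conj (x n) * weylHeisenberg N K v k i n

/-- The matrix of the frame operator `x ↦ ∑ ⟨ξ_{k,i}, x⟩ ξ_{k,i}` of the Weyl–Heisenberg system with
`K` modulations and translation step `N`, after summation over the modulations (Walnut's
representation). -/
noncomputable def frameMatrix (N K : ℕ) (v : ℤ → ℂ) : Matrix ℤ ℤ ℂ :=
  Matrix.of fun a b =>
    if (a : ZMod K) = b then K * ∑' i : ℤ, v (a - i * N) * conj (v (b - i * N)) else 0

lemma frameMatrix_add_mul (N K : ℕ) (v : ℤ → ℂ) (d b : ℤ) :
    frameMatrix N K v (b + d * K) b = K * periodization N (lagProduct v (d * K)) b := by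
  have hterm (i : ℤ) : v (b + d * K - i * N) * conj (v (b - i * N))
      = lagProduct v (d * K) (b - i * N) := by
    rw [lagProduct, mul_comm, add_sub_right_comm]
  simp [frameMatrix, periodization_intCast, hterm]

lemma frameMatrix_eq_smul_one_iff {N K : ℕ} [NeZero N] [NeZero K] (v : ℤ → ℂ) :
    frameMatrix N K v = ((K / N : ℝ) : ℂ) • (1 : Matrix ℤ ℤ ℂ)
      ↔ ∀ (d : ℤ) (r : ZMod N),
        periodization N (lagProduct v (d * K)) r = (if d = 0 then 1 else 0) / N := by
  have hK : (K : ℂ) ≠ 0 := NeZero.ne _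
  have hentry (d b : ℤ) : frameMatrix N K v (b + d * K) b
        = (((K / N : ℝ) : ℂ) • (1 : Matrix ℤ ℤ ℂ)) (b + d * K) b
      ↔ periodization N (lagProduct v (d * K)) b = (if d = 0 then 1 else 0) / N := by
    have hdiag : (((K / N : ℝ) : ℂ) • (1 : Matrix ℤ ℤ ℂ)) (b + d * K) b
        = K * ((if d = 0 then 1 else 0) / N) := by
      simp [Matrix.one_apply, NeZero.ne K, div_eq_mul_inv]
    rw [frameMatrix_add_mul, hdiag, mul_right_inj' hK]
  constructor
  · intro h d r
    obtain ⟨b, rfl⟩ := ZMod.intCast_surjective r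
    exact (hentry d b).1 (by rw [h])
  · intro h
    ext a b
    by_cases hab : (a : ZMod K) = b
    · obtain ⟨d, hd⟩ := (ZMod.intCast_eq_intCast_iff_dvd_sub b a K).1 hab.symm
      obtain rfl : a = b + d * K := by linear_combination hd
      exact (hentry d b).2 (h d b)
    · have hne : a ≠ b := fun h => hab (h ▸ rfl)
      simp [frameMatrix, hab, hne]

variable {N K : ℕ} [NeZero K] {v : ℤ → ℂ}

lemma weylHeisenbergCoeff_finsupp (N : ℕ) (v : ℤ → ℂ) (x : ℤ →₀ ℂ) (k : ZMod K) (i : ℤ) :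
    weylHeisenbergCoeff K N v x k i
      = ∑ n ∈ x.support,
          conj (x n) * v (n - i * N) * stdAddChar (k * ((n - i * N : ℤ) : ZMod K)) := by
  rw [weylHeisenbergCoeff, tsum_eq_sum (s := x.support)]
  · simp_rw [weylHeisenberg, mul_assoc]
  · intro n hn
    simp [Finsupp.notMem_support_iff.1 hn]

lemma memℓp_weylHeisenberg (hv : Memℓp v 2) (k : ZMod K) (i : ℤ) :
    Memℓp (weylHeisenberg K N v k i) 2 := by
  have hshift : Summable fun n : ℤ => ‖v (n - i * N)‖ ^ 2 :=
    (Equiv.subRight (i * N : ℤ)).summable_iff.2 (memℓp_two_iff.1 hv)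
  refine memℓp_two_iff.2 (hshift.congr fun n => ?_)
  rw [weylHeisenberg, norm_mul, AddChar.norm_apply, mul_one]

variable [NeZero N]

lemma summable_translates_mul_conj (hv : Memℓp v 2) (a b : ℤ) :
    Summable fun i : ℤ => v (a - i * N) * conj (v (b - i * N)) := by
  refine ((summable_lagProduct hv (a - b)).comp_injective
    (injective_sub_mul_natCast N b)).congr fun i => ?_
  rw [Function.comp_apply, lagProduct, mul_comm]
  ring_nf

lemma hasSum_sum_norm_sq_weylHeisenbergCoeff (hv : Memℓp v 2) (x : ℤ →₀ ℂ) :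
    HasSum (fun i => ((∑ k, ‖weylHeisenbergCoeff K N v x k i‖ ^ 2 : ℝ) : ℂ))
      (quadForm (frameMatrix N K v) x) := by
  simp_rw [weylHeisenbergCoeff_finsupp, sum_norm_sq_sum_mul_stdAddChar]
  refine hasSum_sum fun a _ => hasSum_sum fun b _ => ?_
  by_cases hab : (a : ZMod K) = b
  · simp only [frameMatrix, Matrix.of_apply, Int.cast_sub, hab, if_true]
    refine (((summable_translates_mul_conj (N := N) hv a b).hasSum.mul_left (K : ℂ)).mul_left
      (conj (x a))).mul_right (x b) |>.congr_fun fun i => ?_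
    rw [map_mul, conj_conj]
    ring
  · simp [frameMatrix, hab, hasSum_zero]

lemma hasSum_norm_sq_weylHeisenbergCoeff_of_finsupp (hv : Memℓp v 2) {x : ℤ →₀ ℂ} {s : ℝ}
    (hs : quadForm (frameMatrix N K v) x = s) :
    HasSum (fun p : ZMod K × ℤ => ‖weylHeisenbergCoeff K N v x p.1 p.2‖ ^ 2) s := by
  refine hasSum_prod_of_hasSum_sum (f := fun k i => ‖weylHeisenbergCoeff K N v x k i‖ ^ 2)
    (fun _ _ => sq_nonneg _) (hasSum_ofReal.1 ?_)
  rw [← hs]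
  exact hasSum_sum_norm_sq_weylHeisenbergCoeff hv x

lemma hasSum_norm_sq_weylHeisenbergCoeff (hv : Memℓp v 2) {C : ℝ}
    (hC : frameMatrix N K v = (C : ℂ) • 1) (x : lp (fun _ : ℤ => ℂ) 2) :
    HasSum (fun p : ZMod K × ℤ => ‖weylHeisenbergCoeff K N v x p.1 p.2‖ ^ 2) (C * ‖x‖ ^ 2) := by
  let ξ (p : ZMod K × ℤ) : lp (fun _ : ℤ => ℂ) 2 :=
    ⟨weylHeisenberg K N v p.1 p.2, memℓp_weylHeisenberg hv p.1 p.2⟩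
  have hξ (p : ZMod K × ℤ) (y : lp (fun _ : ℤ => ℂ) 2) :
      ‖innerSL ℂ (ξ p) y‖ = ‖weylHeisenbergCoeff K N v y p.1 p.2‖ := by
    rw [innerSL_apply_apply, norm_inner_symm, lp.inner_eq_tsum, weylHeisenbergCoeff]
    simp only [RCLike.inner_apply, mul_comm]
    rfl
  simp_rw [← hξ]
  refine hasSum_norm_sq_of_dense (fun p => innerSL ℂ (ξ p))
    (dense_setOf_finite_support (by simp)) (fun y hy => ?_) x
  obtain ⟨z, hz⟩ : ∃ z : ℤ →₀ ℂ, ⇑z = y := ⟨Finsupp.ofSupportFinite y hy, rfl⟩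
  simp_rw [hξ]
  rw [lp_two_norm_sq, ← hz]
  exact hasSum_norm_sq_weylHeisenbergCoeff_of_finsupp hv (hC ▸ quadForm_smul_one C z)

theorem tightFrame_weylHeisenberg_iff (hv : Memℓp v 2) (C : ℝ) :
    (∀ x : ℤ → ℂ, Memℓp x 2 → ∑ k : ZMod K, ∑' i, ‖weylHeisenbergCoeff K N v x k i‖ ^ 2
        = C * ∑' n, ‖x n‖ ^ 2)
      ↔ frameMatrix N K v = (C : ℂ) • 1 := by
  have henergy {x : ℤ → ℂ} {s : ℝ}
      (h : HasSum (fun p : ZMod K × ℤ => ‖weylHeisenbergCoeff K N v x p.1 p.2‖ ^ 2) s) :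
      ∑ k : ZMod K, ∑' i, ‖weylHeisenbergCoeff K N v x k i‖ ^ 2 = s := by
    rw [← h.tsum_eq, h.summable.tsum_prod, tsum_fintype]
  constructor
  · intro h
    refine quadForm_injective (funext fun x => ?_)
    have hx : Memℓp x 2 := memℓp_two_iff.2 (summable_of_hasFiniteSupport
      (x.hasFiniteSupport.subset fun n hn => by simpa using hn))
    have hq := (hasSum_sum_norm_sq_weylHeisenbergCoeff (K := K) (N := N) hv x).tsum_eq.symm
    rw [← ofReal_tsum] at hq
    rw [quadForm_smul_one, ← h x hx,
      henergy (hasSum_norm_sq_weylHeisenbergCoeff_of_finsupp hv hq), hq]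
  · intro hC x hx
    rw [henergy (hasSum_norm_sq_weylHeisenbergCoeff hv hC ⟨x, hx⟩), lp_two_norm_sq]

end Frame

theorem stmt10_general (N K : ℕ) (hN : 0 < N) (hK : 0 < K) (v : ℤ → ℂ) (hv : Memℓp v 2) :
    (∀ (k l : Fin N) (i j : ℤ),
        ∑' n : ℤ,
          conj (v (n - i * K) *
              exp (2 * Real.pi * I * ((k : ℕ) : ℂ) * ((n - i * (K : ℤ) : ℤ) : ℂ) / N)) *
            (v (n - j * K) *
              exp (2 * Real.pi * I * ((l : ℕ) : ℂ) * ((n - j * (K : ℤ) : ℤ) : ℂ) / N))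
          = if k = l ∧ i = j then 1 else 0)
    ↔
    (∀ x : ℤ → ℂ, Summable (fun n : ℤ => ‖x n‖ ^ 2) →
        ∑ k : Fin K, ∑' i : ℤ,
            ‖∑' n : ℤ,
                conj (x n) *
                  (v (n - i * N) *
                    exp (2 * Real.pi * I * ((k : ℕ) : ℂ) * ((n - i * (N : ℤ) : ℤ) : ℂ) / K))‖ ^ 2
          = ((K : ℝ) / N) * ∑' n : ℤ, ‖x n‖ ^ 2) := by
  have : NeZero N := ⟨hN.ne'⟩
  have : NeZero K := ⟨hK.ne'⟩
  have h := (orthonormal_weylHeisenberg_iff (N := N) K hv).trans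
    ((tightFrame_weylHeisenberg_iff hv _).trans (frameMatrix_eq_smul_one_iff v)).symm
  simp only [(bijective_natCast_fin N).surjective.forall,
    (bijective_natCast_fin N).injective.eq_iff, ← (bijective_natCast_fin K).sum_comp,
    weylHeisenbergCoeff, weylHeisenberg_natCast, memℓp_two_iff] at h
  exact h

/-- For finitely supported `v : ℤ → ℂ`, the Weyl–Heisenberg set
`Φ = {φ_{k,i}[n] = v[n−iK]·exp(2πi k(n−iK)/N)}` (`k ∈ {0,…,N−1}`, `i ∈ ℤ`) is
orthonormal if and only if the Weyl–Heisenberg set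
`Ξ = {ξ_{k,i}[n] = v[n−iN]·exp(2πi k(n−iN)/K)}` (`k ∈ {0,…,K−1}`, `i ∈ ℤ`)
is a tight frame for `ℓ²(ℤ)` with frame bound `K/N`:
`∑_{k=0}^{K−1} ∑_{i∈ℤ} |⟨x, ξ_{k,i}⟩|² = (K/N)·‖x‖²` for every `x ∈ ℓ²(ℤ)`,
where `⟨x,y⟩ = ∑_{n∈ℤ} conj(x[n])·y[n]` and `‖x‖² = ∑_{n∈ℤ} |x[n]|²`. -/
theorem stmt10
    (N K : ℕ) (hN : 0 < N) (hNK : N ≤ K)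
    (v : ℤ → ℂ) (hv : (Function.support v).Finite) :
    (∀ (k l : Fin N) (i j : ℤ),
        ∑' n : ℤ,
          (starRingEnd ℂ)
              (v (n - i * K) *
                Complex.exp (2 * Real.pi * Complex.I * ((k : ℕ) : ℂ) * ((n - i * (K : ℤ) : ℤ) : ℂ) / N)) *
            (v (n - j * K) *
              Complex.exp (2 * Real.pi * Complex.I * ((l : ℕ) : ℂ) * ((n - j * (K : ℤ) : ℤ) : ℂ) / N))
          = if k = l ∧ i = j then 1 else 0)
    ↔
    (∀ x : ℤ → ℂ, Summable (fun n : ℤ => ‖x n‖ ^ 2) →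
        ∑ k : Fin K, ∑' i : ℤ,
            ‖∑' n : ℤ,
                (starRingEnd ℂ) (x n) *
                  (v (n - i * N) *
                    Complex.exp (2 * Real.pi * Complex.I * ((k : ℕ) : ℂ) * ((n - i * (N : ℤ) : ℤ) : ℂ) / K))‖ ^ 2
          = ((K : ℝ) / N) * ∑' n : ℤ, ‖x n‖ ^ 2) := by
  exact stmt10_general N K hN (hN.trans_le hNK) v ((memℓp_zero hv).of_exponent_ge bot_le)
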